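/- Let F_n(λ) = ∏_{i=1}^{m}(λ − λ_i) and G_n(λ) = ∏_{i=1}^{m−1}(λ − λ_i − ρ_i), and let μ_n, ν_n be real numbers with −μ_n/ν_n > C·(Λ/λ_1)^n·Λ·M/(Λ − λ_1). Then there exist monic real polynomials F_1,…,F_{n−1}, G_1,…,G_{n−1} and real numbers λ*_2,…,λ*_n, b_2,…,b_n, m_2,…,m_n, μ_1,…,μ_{n−1}, ν_1,…,ν_{n−1} such that for every j = 1,…,n−1: (i) λ*_{j+1} > 0, b_{j+1} > 0, m_{j+1} > 0, and −μ_j/ν_j > C·(Λ/λ_1)^j·Λ·M/(Λ − λ_1); (ii) if j ∉ I, then μ_{j+1}·F_{j+1}(λ) = −m_{j+1}·ν_{j+1}·λ·G_{j+1}(λ) + b_{j+1}·μ_j·(λ*_{j+1} − λ)·F_j(λ) and ν_{j+1}·G_{j+1}(λ) = μ_j·F_j(λ) + b_{j+1}·ν_j·(λ*_{j+1} − λ)·G_j(λ), while if l+1+Σ_{h=1}^{l}q_h ≤ j ≤ l+Σ_{h=1}^{l+1}q_h for some l ∈ {0,…,T−2}, then μ_{j+1}·F_{j+1}(λ) = −m_{j+1}·ν_{j+1}·λ·G_{j+1}(λ)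 − b_{j+1}·μ_j·F_j(λ), ν_{j+1}·(λ − λ*_{j+1})·G_{j+1}(λ) = μ_j·F_j(λ) + b_{j+1}·ν_j·(λ*_{j+1} − λ)·G_j(λ), and λ*_{j+1} = s_{l+1}(l+1+Σ_{h=1}^{l+1}q_h − j). -/

import Mathlib

open Polynomial

/-- `Δ = (1/2)·min{1, min_{1≤i≤m−1}(λ_{i+1} − λ_i)}`. -/
noncomputable def Del (m : ℕ) (lam : ℕ → ℝ) : ℝ :=
  (1 / 2) * min 1 (sInf ((fun i => lam (i + 1) - lam i) '' Set.Icc 1 (m - 1)))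

/-- `Λ = 1 + λ_m`. -/
noncomputable def Lamb (m : ℕ) (lam : ℕ → ℝ) : ℝ := 1 + lam m

/-- `ε = Δ^{n²+n+1}/(n·2^{3(n+1)³}·Λ^{(n+1)²})`. -/
noncomputable def eps (n m : ℕ) (lam : ℕ → ℝ) : ℝ :=
  Del m lam ^ (n ^ 2 + n + 1) /
    ((n : ℝ) * 2 ^ (3 * (n + 1) ^ 3) * Lamb m lam ^ ((n + 1) ^ 2))

/-- `ρ_i = ε^{(n+1)^{m−i}}`. -/
noncomputable def rho (n m : ℕ) (lam : ℕ → ℝ) (i : ℕ) : ℝ :=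
  eps n m lam ^ ((n + 1) ^ (m - i))

/-- `C_1 = Δ/(2^{n+1}Λ)`. -/
noncomputable def Cone (n m : ℕ) (lam : ℕ → ℝ) : ℝ :=
  Del m lam / (2 ^ (n + 1) * Lamb m lam)

/-- `C_2(j) = 2^{2(n+1)²}·Λ^{n+1}/(Δ^n·ε^{(n+1)^{m−j−1}})`. -/
noncomputable def Ctwo (n m : ℕ) (lam : ℕ → ℝ) (j : ℕ) : ℝ :=
  2 ^ (2 * (n + 1) ^ 2) * Lamb m lam ^ (n + 1) /
    (Del m lam ^ n * eps n m lam ^ ((n + 1) ^ (m - j - 1)))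

/-- `C = 2^{2n+1}(1 + Λ^n)/(C_1^{2n²}·ρ_1^{2n})`. -/
noncomputable def CC (n m : ℕ) (lam : ℕ → ℝ) : ℝ :=
  2 ^ (2 * n + 1) * (1 + Lamb m lam ^ n) /
    (Cone n m lam ^ (2 * n ^ 2) * rho n m lam 1 ^ (2 * n))

lemma aux_fact (d : ℕ) (P : ℝ[X]) (a : ℝ) (r : ℕ → ℝ) (hd : P.natDegree ≤ d) (hc : P.coeff d = a)
    (hr : ∀ i j, 1 ≤ i → i < j → j ≤ d → r i < r j)
    (h0 : ∀ i, 1 ≤ i → i ≤ d → P.eval (r i) = 0) :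
    P = C a * ∏ i ∈ Finset.Icc 1 d, (X - C (r i)) := by
  have hmon : (∏ i ∈ Finset.Icc 1 d, (X - C (r i))).Monic := monic_prod_of_monic _ _ (fun _ _ => monic_X_sub_C _)
  have hnd : (∏ i ∈ Finset.Icc 1 d, (X - C (r i))).natDegree = d := by
    rw [natDegree_prod_of_monic _ _ (fun _ _ => monic_X_sub_C _)]; simp
  rw [← sub_eq_zero]
  set p := ∏ i ∈ Finset.Icc 1 d, (X - C (r i)) with hp
  have hinj : Set.InjOn r (Finset.Icc 1 d : Finset ℕ) := by
    intro i hi j hj hij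
    simp at hi hj
    rcases lt_trichotomy i j with h | h | h
    · exact absurd hij (hr i j hi.1 h hj.2).ne
    · exact h
    · exact absurd hij (hr j i hj.1 h hi.2).ne'
  have hcard : ((Finset.Icc 1 d).image r).card = d := by
    rw [Finset.card_image_of_injOn hinj]; simp
  apply Polynomial.eq_zero_of_degree_lt_of_eval_finset_eq_zero ((Finset.Icc 1 d).image r)
  · rw [hcard]
    rw [Polynomial.degree_lt_iff_coeff_zero]
    intro k hk
    rcases hk.eq_or_lt with h | h
    · subst h
      have : p.coeff d = 1 := by
        have := hmon.coeff_natDegree; rwa [hnd] at this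
      simp [hc, this]
    · rw [coeff_sub, coeff_C_mul, coeff_eq_zero_of_natDegree_lt (hd.trans_lt h),
        coeff_eq_zero_of_natDegree_lt (hnd.le.trans_lt h)]; simp
  · intro x hx
    simp only [Finset.mem_image, Finset.mem_Icc] at hx
    obtain ⟨i, hi, rfl⟩ := hx
    have : p.eval (r i) = 0 := by
      rw [hp, eval_prod]
      exact Finset.prod_eq_zero (Finset.mem_Icc.2 hi) (by simp)
    simp [h0 i hi.1 hi.2, this]

lemma aux_reindex (a : ℕ → ℝ) (i e : ℕ) (hi : 1 ≤ i) (hie : i ≤ e + 1) :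
    ∏ k ∈ Finset.Icc 1 (e + 1), a k = a i * ∏ k ∈ Finset.Icc 1 e, a (if k < i then k else k + 1) := by
  induction e with
  | zero => have : i = 1 := by omega
            subst this; simp
  | succ e ih =>
    rcases hie.eq_or_lt with h | h
    · subst h
      rw [Finset.prod_Icc_succ_top (by omega), mul_comm]
      congr 1
      apply Finset.prod_congr rfl
      intro k hk
      rw [Finset.mem_Icc] at hk
      rw [if_pos (by omega)]
    · rw [Finset.prod_Icc_succ_top (by omega), ih (by omega),
        Finset.prod_Icc_succ_top (b := e) (by omega), if_neg (by omega), mul_assoc]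

lemma aux_mono (a : ℕ → ℝ) (N : ℕ) (h : ∀ i, 1 ≤ i → i < N → a i < a (i + 1)) :
    ∀ i j, 1 ≤ i → i < j → j ≤ N → a i < a j := by
  intro i j hi hij
  induction j with
  | zero => omega
  | succ j ih =>
    intro hj
    rcases (Nat.lt_succ_iff.1 hij).eq_or_lt with h' | h'
    · subst h'; exact h _ hi (by omega)
    · exact (ih h' (by omega)).trans (h _ (by omega) (by omega))

lemma aux_evalprod (a : ℕ → ℝ) (e : ℕ) (x : ℝ) :
    (∏ k ∈ Finset.Icc 1 e, (X - C (a k))).eval x = ∏ k ∈ Finset.Icc 1 e, (x - a k) := by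
  rw [eval_prod]; simp

lemma aux_natDegree (a : ℕ → ℝ) (e : ℕ) :
    (∏ k ∈ Finset.Icc 1 e, (X - C (a k))).natDegree = e := by
  rw [natDegree_prod_of_monic _ _ (fun _ _ => monic_X_sub_C _)]; simp

lemma aux_monic (a : ℕ → ℝ) (e : ℕ) :
    (∏ k ∈ Finset.Icc 1 e, (X - C (a k))).Monic :=
  monic_prod_of_monic _ _ (fun _ _ => monic_X_sub_C _)

lemma aux_coeff (a : ℕ → ℝ) (e : ℕ) :
    (∏ k ∈ Finset.Icc 1 e, (X - C (a k))).coeff e = 1 := by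
  have := (aux_monic a e).coeff_natDegree
  rwa [aux_natDegree] at this

lemma aux_ratio (e i : ℕ) (al be : ℕ → ℝ) (x u : ℝ) (hu1 : u ≤ 1)
    (h1 : ∀ k, 1 ≤ k → k ≤ i → al k < x ∧ be k - al k ≤ u * (x - al k))
    (h2 : ∀ k, i < k → k ≤ e → x < al k ∧ al k ≤ be k) (hu : 0 ≤ u) :
    1 - e * u ≤ ∏ k ∈ Finset.Icc 1 e, ((x - be k) / (x - al k)) := by
  have hB : 1 - (e : ℝ) * u ≤ (1 - u) ^ e := by
    have := one_add_mul_le_pow (a := -u) (by linarith) e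
    rw [sub_eq_add_neg 1 u]; linarith
  refine hB.trans ?_
  have : (1 - u) ^ e = ∏ k ∈ Finset.Icc 1 e, (1 - u) := by simp
  rw [this]
  apply Finset.prod_le_prod
  · intros; linarith
  · intro k hk
    rw [Finset.mem_Icc] at hk
    by_cases hki : k ≤ i
    · obtain ⟨a1, a2⟩ := h1 k hk.1 hki
      rw [le_div_iff₀ (by linarith)]; linarith
    · obtain ⟨a1, a2⟩ := h2 k (by omega) hk.2
      rw [← neg_div_neg_eq, le_div_iff₀ (by linarith)]; nlinarith

lemma aux_Groot (e i : ℕ) (hi : 1 ≤ i) (hie : i ≤ e) (al be : ℕ → ℝ) (x kap : ℝ) (hk : 0 < kap)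
    (h1 : ∀ k, 1 ≤ k → k ≤ i → al k < be i)
    (h2 : ∀ k, i < k → k ≤ e → x < al k) (hx : be i < x)
    (hr : kap < ∏ k ∈ Finset.Icc 1 e, ((x - be k) / (x - al k))) :
    ∃ r, be i < r ∧ r < x ∧
      ∏ k ∈ Finset.Icc 1 e, (r - be k) = kap * ∏ k ∈ Finset.Icc 1 e, (r - al k) := by
  have hne : ∀ y ∈ Set.Icc (be i) x, ∀ k ∈ Finset.Icc 1 e, y - al k ≠ 0 := by
    intro y hy k hk
    rw [Finset.mem_Icc] at hk
    by_cases hki : k ≤ i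
    · have := h1 k hk.1 hki
      have := hy.1
      exact ne_of_gt (by linarith)
    · have := h2 k (by omega) hk.2
      have := hy.2
      exact ne_of_lt (by linarith)
  have hcont : ContinuousOn (fun y => ∏ k ∈ Finset.Icc 1 e, ((y - be k) / (y - al k))) (Set.Icc (be i) x) := by
    apply continuousOn_finsetProd
    intro k hk
    apply ContinuousOn.div (by fun_prop) (by fun_prop)
    intro y hy
    exact hne y hy k hk
  have h0 : ∏ k ∈ Finset.Icc 1 e, ((be i - be k) / (be i - al k)) = 0 :=
    Finset.prod_eq_zero (Finset.mem_Icc.2 ⟨hi, hie⟩) (by simp)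
  obtain ⟨r, hr1, hr2⟩ := intermediate_value_Ioo hx.le hcont (show kap ∈ Set.Ioo _ _ from ⟨by rw [h0]; exact hk, hr⟩)
  refine ⟨r, hr1.1, hr1.2, ?_⟩
  simp only [Finset.prod_div_distrib] at hr2
  rw [div_eq_iff] at hr2
  · exact hr2
  · exact Finset.prod_ne_zero_iff.2 (hne r ⟨hr1.1.le, hr1.2.le⟩)

lemma aux_Froot (e i : ℕ) (hi : 1 ≤ i) (hie : i ≤ e) (al be : ℕ → ℝ) (y th : ℝ) (hth : 0 < th)
    (hth1 : th < 1) (hpos : 0 < al i) (hy : al i < y) (hyb : y < be i)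
    (h1 : ∀ k, 1 ≤ k → k < i → al k ≤ be k ∧ be k < al i)
    (h2 : ∀ k, i ≤ k → k ≤ e → y < be k ∧ be k ≤ al (k+1))
    (hr : y * (be i - y) ≤ (y - al i) * (al (i+1) - y)) :
    ∃ r, al i < r ∧ r < y ∧
      ∏ k ∈ Finset.Icc 1 (e+1), (r - al k) = th * (r * ∏ k ∈ Finset.Icc 1 e, (r - be k)) := by
  have hne : ∀ z ∈ Set.Icc (al i) y, ∀ k ∈ Finset.Icc 1 e, z - be k ≠ 0 := by
    intro z hz k hk
    rw [Finset.mem_Icc] at hk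
    by_cases hki : k < i
    · have := h1 k hk.1 hki
      have := hz.1
      exact ne_of_gt (by linarith)
    · have := h2 k (by omega) hk.2
      have := hz.2
      exact ne_of_lt (by linarith)
  have hne' : ∀ z ∈ Set.Icc (al i) y, z * ∏ k ∈ Finset.Icc 1 e, (z - be k) ≠ 0 := by
    intro z hz
    refine mul_ne_zero (by linarith [hz.1]) (Finset.prod_ne_zero_iff.2 (hne z hz))
  have hcont : ContinuousOn (fun z => (∏ k ∈ Finset.Icc 1 (e+1), (z - al k)) /
      (z * ∏ k ∈ Finset.Icc 1 e, (z - be k))) (Set.Icc (al i) y) := by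
    apply ContinuousOn.div (by fun_prop) (by fun_prop)
    exact hne'
  have h0 : (∏ k ∈ Finset.Icc 1 (e+1), (al i - al k)) = 0 :=
    Finset.prod_eq_zero (Finset.mem_Icc.2 ⟨hi, by omega⟩) (by simp)
  have hy1 : 1 ≤ (∏ k ∈ Finset.Icc 1 (e+1), (y - al k)) /
      (y * ∏ k ∈ Finset.Icc 1 e, (y - be k)) := by
    rw [aux_reindex _ i e hi (by omega), mul_div_mul_comm, ← Finset.prod_div_distrib]
    set f : ℕ → ℝ := fun k => (y - al (if k < i then k else k + 1)) / (y - be k) with hf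
    have hfi : f i = (al (i+1) - y) / (be i - y) := by
      simp only [hf, lt_irrefl, if_false]
      rw [← neg_div_neg_eq]; simp
    have hf1 : ∀ k, 1 ≤ k → k ≤ e → 1 ≤ f k := by
      intro k hk1 hk2
      simp only [hf]
      split_ifs with hki
      · have := h1 k hk1 hki
        rw [le_div_iff₀ (by linarith)]; linarith
      · have := h2 k (by omega) hk2
        rw [← neg_div_neg_eq, le_div_iff₀ (by linarith)]; linarith
    have hge : f i ≤ ∏ k ∈ Finset.Icc 1 e, f k := by
      rw [← Finset.mul_prod_erase _ f (Finset.mem_Icc.2 ⟨hi, hie⟩)]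
      apply le_mul_of_one_le_right (by linarith [hf1 i hi hie])
      calc (1:ℝ) = ∏ k ∈ (Finset.Icc 1 e).erase i, 1 := by simp
        _ ≤ _ := by
          apply Finset.prod_le_prod
          · intros; norm_num
          · intro k hk
            rw [Finset.mem_erase, Finset.mem_Icc] at hk
            exact hf1 k hk.2.1 hk.2.2
    calc (1:ℝ) ≤ (y - al i) / y * f i := by
          rw [hfi, div_mul_div_comm, le_div_iff₀ (mul_pos (by linarith) (by linarith))]; linarith
      _ ≤ _ := mul_le_mul_of_nonneg_left hge (div_nonneg (by linarith) (by linarith))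
  obtain ⟨r, hr1, hr2⟩ := intermediate_value_Ioo hy.le hcont
    (show th ∈ Set.Ioo _ _ from ⟨by rw [h0]; simpa using hth, by linarith⟩)
  refine ⟨r, hr1.1, hr1.2, ?_⟩
  rw [div_eq_iff (hne' r ⟨hr1.1.le, hr1.2.le⟩)] at hr2
  exact hr2

lemma aux_Fstep (e : ℕ) (al be : ℕ → ℝ) (Lm De c lst : ℝ) (hDe : 0 < De) (hDL : De ≤ Lm)
    (hc : c = De / (2 * Lm))
    (hpos : ∀ i, 1 ≤ i → i ≤ e + 1 → 0 < al i)
    (hab : ∀ i, 1 ≤ i → i ≤ e → al i < be i)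
    (hba : ∀ i, 1 ≤ i → i ≤ e → be i + De ≤ al (i + 1))
    (hl : al (e + 1) < lst) (hlL : lst ≤ Lm) :
    ∃ (th : ℝ) (al' : ℕ → ℝ), 0 < th ∧ th ≤ 1 - al 1 / lst ∧ al' (e + 1) = lst ∧
      (∀ i, 1 ≤ i → i ≤ e → al i < al' i ∧ al' i + c * (be i - al i) ≤ be i) ∧
      (∏ k ∈ Finset.Icc 1 (e + 1), (X - C (al k))) - C th * X * (∏ k ∈ Finset.Icc 1 e, (X - C (be k)))
        = C (1 - th) * ∏ k ∈ Finset.Icc 1 (e + 1), (X - C (al' k)) := by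
  have hLm : 0 < Lm := by linarith
  have hc0 : 0 < c := by rw [hc]; positivity
  have hc1 : c ≤ 1 / 2 := by
    rw [hc, div_le_div_iff₀ (by positivity) (by norm_num)]; linarith
  have hcL : c * (2 * Lm) = De := by rw [hc]; field_simp
  have hstep : ∀ i, 1 ≤ i → i < e + 1 → al i < al (i + 1) := by
    intro i h1 h2
    linarith [hab i h1 (by omega), hba i h1 (by omega)]
  have hmono := aux_mono al (e+1) hstep
  have hale : ∀ i, 1 ≤ i → i ≤ e + 1 → al i ≤ al (e + 1) := by
    intro i h1 h2
    rcases h2.eq_or_lt with h | h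
    · rw [h]
    · exact (hmono i (e+1) h1 h le_rfl).le
  have hbl : ∀ i, 1 ≤ i → i ≤ e → be i < al (e + 1) := by
    intro i h1 h2
    linarith [hba i h1 h2, hale (i+1) (by omega) (by omega)]
  have hlst : 0 < lst := (hpos (e+1) (by omega) le_rfl).trans hl
  have hGpos : 0 < ∏ k ∈ Finset.Icc 1 e, (lst - be k) := by
    apply Finset.prod_pos
    intro k hk
    rw [Finset.mem_Icc] at hk
    linarith [hbl k hk.1 hk.2]
  have hFpos : 0 < ∏ k ∈ Finset.Icc 1 (e+1), (lst - al k) := by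
    apply Finset.prod_pos
    intro k hk
    rw [Finset.mem_Icc] at hk
    linarith [hale k hk.1 hk.2]
  obtain ⟨th, hth⟩ : ∃ th, th = (∏ k ∈ Finset.Icc 1 (e+1), (lst - al k)) /
    (lst * ∏ k ∈ Finset.Icc 1 e, (lst - be k)) := ⟨_, rfl⟩
  have hth0 : 0 < th := by rw [hth]; positivity
  have hFle : ∏ k ∈ Finset.Icc 1 (e+1), (lst - al k) ≤
      (lst - al 1) * ∏ k ∈ Finset.Icc 1 e, (lst - be k) := by
    rw [aux_reindex _ 1 e le_rfl (by omega)]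
    apply mul_le_mul_of_nonneg_left _ (by linarith [hale 1 le_rfl (by omega)])
    apply Finset.prod_le_prod
    · intro k hk
      rw [Finset.mem_Icc] at hk
      rw [if_neg (by omega)]
      linarith [hale (k+1) (by omega) (by omega)]
    · intro k hk
      rw [Finset.mem_Icc] at hk
      rw [if_neg (by omega)]
      linarith [hba k (by omega) (by omega)]
  have hth1 : th ≤ 1 - al 1 / lst := by
    rw [hth, div_le_iff₀ (by positivity)]
    calc _ ≤ _ := hFle
      _ = _ := by field_simp
  have hal1 : 0 < al 1 / lst := div_pos (hpos 1 le_rfl (by omega)) hlst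
  have hroot : ∀ i, ∃ r, 1 ≤ i → i ≤ e → al i < r ∧ r < be i - c * (be i - al i) ∧
      ∏ k ∈ Finset.Icc 1 (e+1), (r - al k) = th * (r * ∏ k ∈ Finset.Icc 1 e, (r - be k)) := by
    intro i
    by_cases hi : 1 ≤ i ∧ i ≤ e
    · obtain ⟨h1, h2⟩ := hi
      have hg : 0 < be i - al i := by linarith [hab i h1 h2]
      have hcg : 0 < c * (be i - al i) := mul_pos hc0 hg
      have hcg2 : c * (be i - al i) ≤ (be i - al i) / 2 := by nlinarith
      obtain ⟨r, hr⟩ := aux_Froot e i h1 h2 al be (be i - c * (be i - al i)) th hth0 (by linarith)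
        (hpos i h1 (by omega)) (by linarith) (by linarith)
        (by
          intro k hk1 hk2
          refine ⟨(hab k hk1 (by omega)).le, ?_⟩
          have : al (k+1) ≤ al i := by
            rcases (Nat.succ_le_of_lt hk2).eq_or_lt with h | h
            · rw [← h]
            · exact (hmono (k+1) i (by omega) h (by omega)).le
          linarith [hba k hk1 (by omega)])
        (by
          intro k hk1 hk2
          refine ⟨?_, by linarith [hba k (by omega) hk2]⟩
          have : al i ≤ al k := by
            rcases hk1.eq_or_lt with h | h
            · rw [h]
            · exact (hmono i k (by omega) h (by omega)).le
          rcases hk1.eq_or_lt with h | h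
          · rw [← h]; linarith
          · have := hmono i k (by omega) h (by omega)
            have h3 : al (i+1) ≤ al k := by
              rcases (Nat.succ_le_of_lt h).eq_or_lt with h | h
              · rw [← h]
              · exact (hmono (i+1) k (by omega) h (by omega)).le
            linarith [hba i h1 h2, hab k (by omega) hk2])
        (by
          have e1 : be i - c * (be i - al i) ≤ Lm := by
            linarith [hbl i h1 h2]
          have e2 : De ≤ al (i+1) - (be i - c * (be i - al i)) := by linarith [hba i h1 h2]
          have e3 : (be i - al i) / 2 ≤ be i - c * (be i - al i) - al i := by linarith
          calc _ = (be i - c * (be i - al i)) * (c * (be i - al i)) := by ring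
            _ ≤ Lm * (c * (be i - al i)) := mul_le_mul_of_nonneg_right e1 hcg.le
            _ = (be i - al i) / 2 * De := by rw [← hcL]; ring
            _ ≤ _ := mul_le_mul e3 e2 hDe.le (by linarith))
      exact ⟨r, fun _ _ => hr⟩
    · exact ⟨0, fun h1 h2 => absurd ⟨h1, h2⟩ hi⟩
  choose r hr using hroot
  refine ⟨th, fun i => if i = e + 1 then lst else r i, hth0, hth1, by simp, ?_, ?_⟩
  · intro i h1 h2
    simp only
    rw [if_neg (by omega)]
    obtain ⟨a1, a2, _⟩ := hr i h1 h2
    exact ⟨a1, by linarith⟩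
  · apply aux_fact (e+1)
    · refine (natDegree_sub_le _ _).trans ?_
      rw [aux_natDegree]
      apply max_le le_rfl
      refine natDegree_mul_le.trans ?_
      rw [aux_natDegree]
      have h1 : (C th * X : ℝ[X]).natDegree ≤ 1 := by
        simpa using natDegree_C_mul_X_pow_le th 1
      omega
    · rw [coeff_sub, aux_coeff, mul_assoc, coeff_C_mul, coeff_X_mul, aux_coeff]; ring
    · apply aux_mono
      intro i h1 h2
      rw [if_neg (by omega)]
      obtain ⟨a1, a2, _⟩ := hr i h1 (by omega)
      have a3 : 0 < c * (be i - al i) := mul_pos hc0 (by linarith [hab i h1 (by omega)])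
      split_ifs with h
      · have : be i < al (e+1) := hbl i h1 (by omega)
        linarith
      · linarith [hba i h1 (by omega), (hr (i+1) (by omega) (by omega)).1]
    · intro i h1 h2
      simp only [eval_sub, eval_mul, aux_evalprod, eval_C, eval_X]
      split_ifs with h
      · rw [hth]; field_simp; ring
      · rw [(hr i h1 (by omega)).2.2]; ring


lemma aux_Gcore (e e0 : ℕ) (he : e0 ≤ e) (al be x : ℕ → ℝ) (u kap : ℝ) (hu : 0 ≤ u) (hu1 : u ≤ 1)
    (hk : 0 < kap) (hku : kap < 1 - e * u)
    (hab : ∀ i, 1 ≤ i → i ≤ e → al i < be i)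
    (hba : ∀ i k, 1 ≤ i → i < k → k ≤ e → x i < al k)
    (hbx : ∀ i, 1 ≤ i → i ≤ e0 → be i < x i)
    (hx : ∀ i k, 1 ≤ i → i ≤ e0 → 1 ≤ k → k ≤ i → be k - al k ≤ u * (x i - al k)) :
    ∃ be' : ℕ → ℝ, (∀ i, 1 ≤ i → i ≤ e0 → be i < be' i ∧ be' i < x i ∧
      ∏ k ∈ Finset.Icc 1 e, (be' i - be k) = kap * ∏ k ∈ Finset.Icc 1 e, (be' i - al k)) := by
  have hroot : ∀ i, ∃ r, 1 ≤ i → i ≤ e0 → be i < r ∧ r < x i ∧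
      ∏ k ∈ Finset.Icc 1 e, (r - be k) = kap * ∏ k ∈ Finset.Icc 1 e, (r - al k) := by
    intro i
    by_cases hi : 1 ≤ i ∧ i ≤ e0
    · obtain ⟨h1, h2⟩ := hi
      have hak : ∀ k, 1 ≤ k → k ≤ i → al k < be i := by
        intro k k1 k2
        rcases k2.eq_or_lt with h | h
        · rw [h]; exact hab i h1 (by omega)
        · linarith [hab k k1 (by omega), hbx k k1 (by omega), hba k i k1 h (by omega),
            hab i h1 (by omega)]
      obtain ⟨r, hr⟩ := aux_Groot e i h1 (by omega) al be (x i) kap hk hak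
        (fun k k1 k2 => hba i k h1 k1 k2) (hbx i h1 h2)
        (hku.trans_le (aux_ratio e i al be (x i) u hu1
          (fun k k1 k2 => ⟨(hak k k1 k2).trans (hbx i h1 h2), hx i k h1 h2 k1 k2⟩)
          (fun k k1 k2 => ⟨hba i k h1 k1 k2, (hab k (by omega) k2).le⟩) hu))
      exact ⟨r, fun _ _ => hr⟩
    · exact ⟨0, fun h1 h2 => absurd ⟨h1, h2⟩ hi⟩
  choose r hr using hroot
  exact ⟨r, hr⟩

/-- moving the roots of `G`, with all roots found by the intermediate value theorem. -/
lemma aux_GB (e : ℕ) (al be x : ℕ → ℝ) (u kap : ℝ) (hu : 0 ≤ u) (hu1 : u ≤ 1) (hk : 0 < kap)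
    (hku : kap < 1 - e * u)
    (hab : ∀ i, 1 ≤ i → i ≤ e → al i < be i)
    (hba : ∀ i k, 1 ≤ i → i < k → k ≤ e → x i < al k)
    (hbx : ∀ i, 1 ≤ i → i ≤ e → be i < x i)
    (hx : ∀ i k, 1 ≤ i → i ≤ e → 1 ≤ k → k ≤ i → be k - al k ≤ u * (x i - al k)) :
    ∃ be' : ℕ → ℝ, (∀ i, 1 ≤ i → i ≤ e → be i < be' i ∧ be' i < x i) ∧
      (∏ k ∈ Finset.Icc 1 e, (X - C (be k))) - C kap * (∏ k ∈ Finset.Icc 1 e, (X - C (al k)))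
        = C (1 - kap) * ∏ k ∈ Finset.Icc 1 e, (X - C (be' k)) := by
  obtain ⟨r, hr⟩ := aux_Gcore e e le_rfl al be x u kap hu hu1 hk hku hab hba hbx hx
  refine ⟨r, fun i h1 h2 => ⟨(hr i h1 h2).1, (hr i h1 h2).2.1⟩, ?_⟩
  apply aux_fact e
  · refine (natDegree_sub_le _ _).trans ?_
    rw [aux_natDegree]
    apply max_le le_rfl
    exact (natDegree_C_mul_le _ _).trans (aux_natDegree _ _).le
  · rw [coeff_sub, aux_coeff, coeff_C_mul, aux_coeff]; ring
  · apply aux_mono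
    intro i h1 h2
    linarith [(hr i h1 (by omega)).2.1, (hr (i+1) (by omega) (by omega)).1,
      hba i (i+1) h1 (by omega) (by omega), hab (i+1) (by omega) (by omega)]
  · intro i h1 h2
    simp only [eval_sub, eval_mul, aux_evalprod, eval_C]
    rw [(hr i h1 h2).2.2]; ring

lemma aux_GA (e : ℕ) (al be x : ℕ → ℝ) (u kap lst : ℝ) (hu : 0 ≤ u) (hu1 : u ≤ 1) 
    (hkap : kap = (∏ k ∈ Finset.Icc 1 (e+1), (lst - be k)) / ∏ k ∈ Finset.Icc 1 (e+1), (lst - al k))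
    (hku : kap < 1 - (e + 1 : ℕ) * u)
    (hl : be (e+1) < lst)
    (hab : ∀ i, 1 ≤ i → i ≤ e + 1 → al i < be i)
    (hba : ∀ i k, 1 ≤ i → i < k → k ≤ e + 1 → x i < al k)
    (hbx : ∀ i, 1 ≤ i → i ≤ e → be i < x i)
    (hx : ∀ i k, 1 ≤ i → i ≤ e → 1 ≤ k → k ≤ i → be k - al k ≤ u * (x i - al k)) :
    ∃ be' : ℕ → ℝ, 0 < kap ∧ (∀ i, 1 ≤ i → i ≤ e → be i < be' i ∧ be' i < x i) ∧
      (∏ k ∈ Finset.Icc 1 (e+1), (X - C (be k))) - C kap * (∏ k ∈ Finset.Icc 1 (e+1), (X - C (al k)))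
        = C (1 - kap) * ((X - C lst) * ∏ k ∈ Finset.Icc 1 e, (X - C (be' k))) := by
  have hbl : ∀ i, 1 ≤ i → i ≤ e + 1 → be i < lst := by
    intro i h1 h2
    rcases h2.eq_or_lt with h | h
    · rw [h]; exact hl
    · linarith [hbx i h1 (by omega), hba i (e+1) h1 h le_rfl, hab (e+1) (by omega) le_rfl]
  have hGpos : 0 < ∏ k ∈ Finset.Icc 1 (e+1), (lst - be k) := by
    apply Finset.prod_pos
    intro k hk
    rw [Finset.mem_Icc] at hk
    linarith [hbl k hk.1 hk.2]
  have hFpos : 0 < ∏ k ∈ Finset.Icc 1 (e+1), (lst - al k) := by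
    apply Finset.prod_pos
    intro k hk
    rw [Finset.mem_Icc] at hk
    linarith [hbl k hk.1 hk.2, hab k hk.1 hk.2]
  have hk : 0 < kap := by rw [hkap]; positivity
  obtain ⟨r, hr⟩ := aux_Gcore (e+1) e (by omega) al be x u kap hu hu1 hk hku hab hba hbx hx
  refine ⟨r, hk, fun i h1 h2 => ⟨(hr i h1 h2).1, (hr i h1 h2).2.1⟩, ?_⟩
  rw [aux_fact (e+1) ((∏ k ∈ Finset.Icc 1 (e+1), (X - C (be k))) -
    C kap * (∏ k ∈ Finset.Icc 1 (e+1), (X - C (al k)))) (1 - kap)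
    (fun i => if i = e + 1 then lst else r i)]
  · congr 1
    rw [Finset.prod_Icc_succ_top (by omega), mul_comm]
    congr 1
    · simp
    · apply Finset.prod_congr rfl
      intro k hk
      rw [Finset.mem_Icc] at hk
      rw [if_neg (by omega)]
  · refine (natDegree_sub_le _ _).trans ?_
    rw [aux_natDegree]
    apply max_le le_rfl
    exact (natDegree_C_mul_le _ _).trans (aux_natDegree _ _).le
  · rw [coeff_sub, aux_coeff, coeff_C_mul, aux_coeff]; ring
  · apply aux_mono
    intro i h1 h2
    rw [if_neg (by omega)]
    have := hba i (i+1) h1 (by omega) (by omega)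
    have := hab (i+1) (by omega) (by omega)
    have := (hr i h1 (by omega)).2.1
    split_ifs with h
    · have := hbl (i+1) (by omega) (by omega)
      linarith
    · linarith [(hr (i+1) (by omega) (by omega)).1]
  · intro i h1 h2
    simp only [eval_sub, eval_mul, aux_evalprod, eval_C]
    split_ifs with h
    · rw [hkap]; field_simp; ring
    · rw [(hr i h1 (by omega)).2.2]; ring

lemma aux_xbound (e : ℕ) (lam al' be U : ℕ → ℝ) (De W : ℝ) (hDe : 0 < De)
    (hW : 2 ≤ W) 
    (hlam : ∀ i k, 1 ≤ i → i < k → k ≤ e + 1 → lam i + 2 * De ≤ lam k)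
    (hal : ∀ i, 1 ≤ i → i ≤ e → lam i ≤ al' i)
    (hab : ∀ i, 1 ≤ i → i ≤ e → al' i < be i)
    (hbU : ∀ i, 1 ≤ i → i ≤ e → be i ≤ lam i + U i)
    (hUpos : ∀ i, 1 ≤ i → i ≤ e → 0 < U i)
    (hUm : ∀ k i, 1 ≤ k → k ≤ i → i ≤ e → U k ≤ U i) :
    ∀ i k, 1 ≤ i → i ≤ e → 1 ≤ k → k ≤ i → be k - al' k ≤ 2 / W * (lam i + W * U i - al' k) := by
  intro i k h1 h2 k1 k2
  have hlik : lam k ≤ lam i := by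
    rcases k2.eq_or_lt with h | h
    · rw [h]
    · linarith [hlam k i k1 h (by omega)]
  have a1 := hUm k i k1 k2 h2
  have a2 := hbU k k1 (by omega)
  have a3 := hal k k1 (by omega)
  have a4 := hab k k1 (by omega)
  have a5 := hUpos i h1 h2
  rw [div_mul_eq_mul_div, le_div_iff₀ (by linarith)]
  have : (be k - al' k) * W ≤ U i * W := by
    apply mul_le_mul_of_nonneg_right _ (by linarith); linarith
  nlinarith

lemma aux_stepB (e : ℕ) (lam al be U : ℕ → ℝ) (Lm De c lst W kap : ℝ) (hDe : 0 < De) (hDL : De ≤ Lm)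
    (hc : c = De / (2 * Lm)) (hW : 2 ≤ W)
    (hlam : ∀ i k, 1 ≤ i → i < k → k ≤ e + 1 → lam i + 2 * De ≤ lam k)
    (hlpos : ∀ i, 1 ≤ i → i ≤ e + 1 → 0 < lam i)
    (hal : ∀ i, 1 ≤ i → i ≤ e + 1 → lam i ≤ al i)
    (hab : ∀ i, 1 ≤ i → i ≤ e → al i < be i)
    (hbU : ∀ i, 1 ≤ i → i ≤ e → be i ≤ lam i + U i)
    (hUpos : ∀ i, 1 ≤ i → i ≤ e → 0 < U i)
    (hUm : ∀ k i, 1 ≤ k → k ≤ i → i ≤ e → U k ≤ U i)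
    (hWU : ∀ i, 1 ≤ i → i ≤ e → W * U i ≤ De)
    (hl : al (e + 1) < lst) (hlL : lst ≤ Lm)
    (hk : 0 < kap) (hku : kap < 1 - e * (2 / W)) :
    ∃ (th : ℝ) (al' be' : ℕ → ℝ), 0 < th ∧ th ≤ 1 - lam 1 / lst ∧ al' (e + 1) = lst ∧
      (∀ i, 1 ≤ i → i ≤ e → al i < al' i ∧ al' i + c * (be i - al i) ≤ be' i ∧
        be' i ≤ lam i + W * U i) ∧
      (∏ k ∈ Finset.Icc 1 (e + 1), (X - C (al k))) - C th * X * (∏ k ∈ Finset.Icc 1 e, (X - C (be k)))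
        = C (1 - th) * ((X - C lst) * ∏ k ∈ Finset.Icc 1 e, (X - C (al' k))) ∧
      (∏ k ∈ Finset.Icc 1 e, (X - C (be k))) - C kap * (∏ k ∈ Finset.Icc 1 e, (X - C (al' k)))
        = C (1 - kap) * ∏ k ∈ Finset.Icc 1 e, (X - C (be' k)) := by
  have hUW : ∀ i, 1 ≤ i → i ≤ e → 2 * U i ≤ W * U i := fun i h1 h2 =>
    mul_le_mul_of_nonneg_right hW (hUpos i h1 h2).le
  obtain ⟨th, al', t0, t1, t2, t3, t4⟩ := aux_Fstep e al be Lm De c lst hDe hDL hc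
    (fun i h1 h2 => (hlpos i h1 h2).trans_le (hal i h1 h2)) hab
    (fun i h1 h2 => by
      linarith [hbU i h1 h2, hWU i h1 h2, hlam i (i+1) h1 (by omega) (by omega),
        hal (i+1) (by omega) (by omega), hUW i h1 h2, hUpos i h1 h2]) hl hlL
  have hc0 : 0 < c := by rw [hc]; exact div_pos hDe (by linarith)
  have hab' : ∀ i, 1 ≤ i → i ≤ e → al' i < be i := fun i h1 h2 => by
    have := mul_pos hc0 (sub_pos.2 (hab i h1 h2))
    linarith [(t3 i h1 h2).2]
  have hal' : ∀ i, 1 ≤ i → i ≤ e → lam i ≤ al' i := fun i h1 h2 => by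
    linarith [hal i h1 (by omega), (t3 i h1 h2).1]
  obtain ⟨be', b1, b2⟩ := aux_GB e al' be (fun i => lam i + W * U i) (2 / W) kap
    (by positivity) (by rw [div_le_one (by linarith)]; exact hW) hk hku hab'
    (fun i k h1 h2 h3 => by
      linarith [hWU i h1 (by omega), hlam i k h1 h2 (by omega), hal' k (by omega) h3])
    (fun i h1 h2 => by linarith [hbU i h1 h2, hUW i h1 h2, hUpos i h1 h2])
    (aux_xbound e lam al' be U De W hDe hW hlam hal' hab' hbU hUpos hUm)
  have hlst : 0 < lst := by linarith [hlpos (e+1) (by omega) le_rfl, hal (e+1) (by omega) le_rfl]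
  refine ⟨th, al', be', t0, ?_, t2, ?_, ?_, b2⟩
  · have : lam 1 / lst ≤ al 1 / lst := div_le_div_of_nonneg_right (hal 1 le_rfl (by omega)) hlst.le
    linarith
  · intro i h1 h2
    have := t3 i h1 h2
    have := b1 i h1 h2
    exact ⟨(t3 i h1 h2).1, by linarith, this.2.le⟩
  · rw [t4, Finset.prod_Icc_succ_top (by omega), t2]; ring

lemma aux_stepA (e : ℕ) (lam al be U : ℕ → ℝ) (Lm De c lst W : ℝ) (hDe : 0 < De) (hDL : De ≤ Lm)
    (hc : c = De / (2 * Lm)) (hW : 2 ≤ W)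
    (hlam : ∀ i k, 1 ≤ i → i < k → k ≤ e + 2 → lam i + 2 * De ≤ lam k)
    (hlpos : ∀ i, 1 ≤ i → i ≤ e + 2 → 0 < lam i)
    (hal : ∀ i, 1 ≤ i → i ≤ e + 2 → lam i ≤ al i)
    (hab : ∀ i, 1 ≤ i → i ≤ e + 1 → al i < be i)
    (hbD : ∀ i, 1 ≤ i → i ≤ e + 1 → be i ≤ lam i + De)
    (hbU : ∀ i, 1 ≤ i → i ≤ e → be i ≤ lam i + U i)
    (hUpos : ∀ i, 1 ≤ i → i ≤ e → 0 < U i)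
    (hUm : ∀ k i, 1 ≤ k → k ≤ i → i ≤ e → U k ≤ U i)
    (hWU : ∀ i, 1 ≤ i → i ≤ e → W * U i ≤ De)
    (hl : al (e + 2) < lst) (hlL : lst ≤ Lm)
    (hgap : (e + 1 : ℕ) * (2 / W) < c * (be (e + 1) - al (e + 1)) / Lm) :
    ∃ (th kap : ℝ) (al' be' : ℕ → ℝ), 0 < th ∧ th ≤ 1 - lam 1 / lst ∧ 0 < kap ∧ kap < 1 ∧
      (∀ i, 1 ≤ i → i ≤ e + 1 → al i < al' i ∧ al' i < lam i + De) ∧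
      (∀ i, 1 ≤ i → i ≤ e → al' i + c * (be i - al i) ≤ be' i ∧
        be' i ≤ lam i + W * U i) ∧
      (∏ k ∈ Finset.Icc 1 (e + 2), (X - C (al k))) -
          C th * X * (∏ k ∈ Finset.Icc 1 (e + 1), (X - C (be k)))
        = C (1 - th) * ((X - C lst) * ∏ k ∈ Finset.Icc 1 (e + 1), (X - C (al' k))) ∧
      (∏ k ∈ Finset.Icc 1 (e + 1), (X - C (be k))) -
          C kap * (∏ k ∈ Finset.Icc 1 (e + 1), (X - C (al' k)))
        = C (1 - kap) * ((X - C lst) * ∏ k ∈ Finset.Icc 1 e, (X - C (be' k))) := by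
  have hUW : ∀ i, 1 ≤ i → i ≤ e → 2 * U i ≤ W * U i := fun i h1 h2 =>
    mul_le_mul_of_nonneg_right hW (hUpos i h1 h2).le
  obtain ⟨th, al', t0, t1, t2, t3, t4⟩ := aux_Fstep (e+1) al be Lm De c lst hDe hDL hc
    (fun i h1 h2 => (hlpos i h1 h2).trans_le (hal i h1 h2)) hab
    (fun i h1 h2 => by
      linarith [hbD i h1 h2, hlam i (i+1) h1 (by omega) (by omega),
        hal (i+1) (by omega) (by omega)]) hl hlL
  have hc0 : 0 < c := by rw [hc]; exact div_pos hDe (by linarith)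
  have hab' : ∀ i, 1 ≤ i → i ≤ e + 1 → al' i < be i := fun i h1 h2 => by
    have := mul_pos hc0 (sub_pos.2 (hab i h1 h2))
    linarith [(t3 i h1 h2).2]
  have hal' : ∀ i, 1 ≤ i → i ≤ e + 1 → lam i ≤ al' i := fun i h1 h2 => by
    linarith [hal i h1 (by omega), (t3 i h1 h2).1]
  have hLm : 0 < Lm := by linarith
  have hlamm : ∀ i k, 1 ≤ i → i ≤ k → k ≤ e + 2 → lam i ≤ lam k := by
    intro i k h1 h2 h3
    rcases h2.eq_or_lt with h | h
    · rw [h]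
    · linarith [hlam i k h1 h h3]
  have hbl : ∀ i, 1 ≤ i → i ≤ e + 1 → be i < lst := by
    intro i h1 h2
    linarith [hbD i h1 h2, hlam i (e+2) h1 (by omega) le_rfl, hal (e+2) (by omega) le_rfl]
  have hrat : ∀ k, 1 ≤ k → k ≤ e + 1 → 0 ≤ (lst - be k) / (lst - al' k) ∧
      (lst - be k) / (lst - al' k) ≤ 1 := by
    intro k h1 h2
    have a1 := hbl k h1 h2
    have a2 := hab' k h1 h2
    refine ⟨div_nonneg (by linarith) (by linarith), ?_⟩
    rw [div_le_one (by linarith)]; linarith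
  obtain ⟨kap, hkap⟩ : ∃ kap, kap = (∏ k ∈ Finset.Icc 1 (e+1), (lst - be k)) /
    ∏ k ∈ Finset.Icc 1 (e+1), (lst - al' k) := ⟨_, rfl⟩
  have hkle : kap ≤ 1 - c * (be (e + 1) - al (e + 1)) / Lm := by
    have a1 := hbl (e+1) (by omega) le_rfl
    have a2 := hab' (e+1) (by omega) le_rfl
    have a3 := hal' (e+1) (by omega) le_rfl
    have a4 := hlpos (e+1) (by omega) (by omega)
    have a5 := (t3 (e+1) (by omega) le_rfl).2
    have a6 := mul_pos hc0 (sub_pos.2 (hab (e+1) (by omega) le_rfl))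
    have h1 : kap ≤ (lst - be (e+1)) / (lst - al' (e+1)) := by
      rw [hkap, ← Finset.prod_div_distrib, Finset.prod_Icc_succ_top (by omega)]
      apply mul_le_of_le_one_left (hrat (e+1) (by omega) le_rfl).1
      apply Finset.prod_le_one
      · intro k hk
        rw [Finset.mem_Icc] at hk
        exact (hrat k hk.1 (by omega)).1
      · intro k hk
        rw [Finset.mem_Icc] at hk
        exact (hrat k hk.1 (by omega)).2
    have h2 : (lst - be (e+1)) / (lst - al' (e+1)) =
        1 - (be (e+1) - al' (e+1)) / (lst - al' (e+1)) := by
      have : lst - al' (e+1) ≠ 0 := by linarith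
      field_simp; ring
    have h3 : c * (be (e + 1) - al (e + 1)) / Lm ≤ (be (e+1) - al' (e+1)) / (lst - al' (e+1)) := by
      apply div_le_div₀ <;> linarith
    linarith
  obtain ⟨be', hk, b1, b2⟩ := aux_GA e al' be (fun i => lam i + min (W * U i) De) (2 / W) kap lst
    (by positivity) (by rw [div_le_one (by linarith)]; exact hW) hkap (by linarith)
    (hbl _ (by omega) le_rfl) hab'
    (fun i k h1 h2 h3 => by
      linarith [min_le_right (W * U i) De, hlam i k h1 h2 (by omega), hal' k (by omega) h3])
    (fun i h1 h2 => by
      rw [min_eq_left (hWU i h1 h2)]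
      linarith [hbU i h1 h2, hUW i h1 h2, hUpos i h1 h2])
    (fun i k h1 h2 => by
      rw [min_eq_left (hWU i h1 h2)]
      exact aux_xbound e lam al' be U De W hDe hW (fun i k a b c => hlam i k a b (by omega))
        (fun i a b => hal' i a (by omega)) (fun i a b => hab' i a (by omega)) hbU hUpos hUm i k h1 h2)
  have hlst : 0 < lst := by linarith [hlpos (e+2) (by omega) le_rfl, hal (e+2) (by omega) le_rfl]
  have hcg := mul_pos hc0 (sub_pos.2 (hab (e+1) (by omega) le_rfl))
  refine ⟨th, kap, al', be', t0, ?_, hk, ?_, ?_, ?_, ?_, b2⟩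
  · have : lam 1 / lst ≤ al 1 / lst := div_le_div_of_nonneg_right (hal 1 le_rfl (by omega)) hlst.le
    linarith
  · have : 0 < c * (be (e + 1) - al (e + 1)) / Lm := div_pos hcg hLm
    linarith
  · intro i h1 h2
    exact ⟨(t3 i h1 h2).1, by linarith [hab' i h1 h2, hbD i h1 h2]⟩
  · intro i h1 h2
    have := t3 i h1 (by omega)
    have h3 := b1 i h1 h2
    simp only [min_eq_left (hWU i h1 h2)] at h3
    exact ⟨by linarith, h3.2.le⟩
  · rw [t4, Finset.prod_Icc_succ_top (by omega), t2]; ring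

lemma aux_chain {S : Type*} (n : ℕ) (hn : 1 ≤ n) (Inv : ℕ → S → Prop) (R : ℕ → S → S → Prop) :
    ∀ s0 : S, Inv n s0 →
    (∀ j st, 1 ≤ j → j + 1 ≤ n → Inv (j + 1) st → ∃ st', Inv j st' ∧ R j st st') →
    ∃ f : ℕ → S, f n = s0 ∧ ∀ j, 1 ≤ j → j + 1 ≤ n → R j (f (j + 1)) (f j) := by
  induction n, hn using Nat.le_induction with
  | base =>
    intro s0 _ _
    exact ⟨fun _ => s0, rfl, fun j h1 h2 => by omega⟩
  | succ n hn ih =>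
    intro s0 h0 hs
    obtain ⟨st', h1, h2⟩ := hs n s0 hn le_rfl h0
    obtain ⟨f, hf, hR⟩ := ih st' h1 (fun j st a b => hs j st a (by omega))
    refine ⟨Function.update f (n+1) s0, by simp, ?_⟩
    intro j j1 j2
    rcases j2.eq_or_lt with h | h
    · have : j = n := by omega
      subst this
      rw [Function.update_self, Function.update_of_ne (by omega), hf]
      exact h2
    · rw [Function.update_of_ne (by omega), Function.update_of_ne (by omega)]
      exact hR j j1 (by omega)

lemma aux_algA (F G F' G' : ℝ[X]) (th kap lst mu nu : ℝ) (hK : 0 < -mu / nu) (hnu : nu ≠ 0)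
    (th0 : 0 < th) (th1 : th < 1) (k0 : 0 < kap) (k1 : kap < 1)
    (e1 : F - C th * X * G = C (1 - th) * ((X - C lst) * F'))
    (e2 : G - C kap * F' = C (1 - kap) * ((X - C lst) * G')) :
    ∃ mu' nu' b mm : ℝ, nu' ≠ 0 ∧ 0 < b ∧ 0 < mm ∧
      -mu' / nu' = -mu / nu * (1 - th) / (1 - kap) ∧
      C mu * F = -(C mm * C nu) * X * G + C b * C mu' * (C lst - X) * F' ∧
      C nu * G = C mu' * F' + C b * C nu' * (C lst - X) * G' := by
  obtain ⟨K, hKd⟩ : ∃ K, K = -mu / nu := ⟨_, rfl⟩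
  rw [← hKd] at hK ⊢
  have hmu : mu = -(K * nu) := by rw [hKd]; field_simp
  have a1 : 0 < 1 - th := by linarith
  have a2 : 0 < 1 - kap := by linarith
  refine ⟨kap * nu, -((1 - kap) * kap * nu / (K * (1 - th))), K * (1 - th) / kap, th * K,
    ?_, by positivity, by positivity, ?_, ?_, ?_⟩
  · exact neg_ne_zero.2 (by positivity)
  · field_simp
  · have hb : C (K * (1 - th) / kap) * C (kap * nu) = C K * C nu * C (1 - th) := by
      rw [← C_mul, ← C_mul, ← C_mul]; congr 1; field_simp
    rw [hb, hmu]
    simp only [C_neg, C_mul]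
    linear_combination (-C K * C nu) * e1
  · have hb : C (K * (1 - th) / kap) * C (-((1 - kap) * kap * nu / (K * (1 - th)))) =
      -(C (1 - kap) * C nu) := by
      rw [← C_mul, ← C_mul, ← C_neg]; congr 1; field_simp
    rw [hb]
    simp only [C_mul]
    linear_combination C nu * e2

lemma aux_algB (F G H G' : ℝ[X]) (th kap lst mu nu : ℝ) (hK : 0 < -mu / nu) (hnu : nu ≠ 0)
    (th0 : 0 < th) (th1 : th < 1) (k0 : 0 < kap) (k1 : kap < 1)
    (e1 : F - C th * X * G = C (1 - th) * ((X - C lst) * H))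
    (e2 : G - C kap * H = C (1 - kap) * G') :
    ∃ mu' nu' b mm : ℝ, nu' ≠ 0 ∧ 0 < b ∧ 0 < mm ∧
      -mu' / nu' = -mu / nu * (1 - th) / (1 - kap) ∧
      C mu * F = -(C mm * C nu) * X * G - C b * C mu' * ((X - C lst) * H) ∧
      C nu * (X - C lst) * G = C mu' * ((X - C lst) * H) + C b * C nu' * (C lst - X) * G' := by
  obtain ⟨K, hKd⟩ : ∃ K, K = -mu / nu := ⟨_, rfl⟩
  rw [← hKd] at hK ⊢
  have hmu : mu = -(K * nu) := by rw [hKd]; field_simp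
  have a1 : 0 < 1 - th := by linarith
  have a2 : 0 < 1 - kap := by linarith
  refine ⟨kap * nu, -((1 - kap) * kap * nu / (K * (1 - th))), K * (1 - th) / kap, th * K,
    ?_, by positivity, by positivity, ?_, ?_, ?_⟩
  · exact neg_ne_zero.2 (by positivity)
  · field_simp
  · have hb : C (K * (1 - th) / kap) * C (kap * nu) = C K * C nu * C (1 - th) := by
      rw [← C_mul, ← C_mul, ← C_mul]; congr 1; field_simp
    rw [hb, hmu]
    simp only [C_neg, C_mul]
    linear_combination (-C K * C nu) * e1
  · have hb : C (K * (1 - th) / kap) * C (-((1 - kap) * kap * nu / (K * (1 - th)))) =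
      -(C (1 - kap) * C nu) := by
      rw [← C_mul, ← C_mul, ← C_neg]; congr 1; field_simp
    rw [hb]
    simp only [C_mul]
    linear_combination C nu * (X - C lst) * e2

lemma aux_Kbound (A R l1 Lm lst th kap K : ℝ) (j : ℕ) (hA : 0 ≤ A) (hR : 0 ≤ R) (hl1 : 0 < l1)
    (hlst : 0 < lst) (hlL : lst ≤ Lm) (hth : th ≤ 1 - l1 / lst) (k0 : 0 < kap) (k1 : kap < 1)
    (hK : K > A * (Lm / l1) ^ (j + 1) * R) :
    K * (1 - th) / (1 - kap) > A * (Lm / l1) ^ j * R := by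
  have hLm : 0 < Lm := by linarith
  have h1 : l1 / Lm ≤ l1 / lst := div_le_div_of_nonneg_left hl1.le hlst hlL
  have h2 : 0 < l1 / Lm := by positivity
  have hK0 : 0 < K := lt_of_le_of_lt (by positivity) hK
  have h3 : A * (Lm / l1) ^ (j + 1) * R * (l1 / Lm) = A * (Lm / l1) ^ j * R := by
    rw [pow_succ]; field_simp
  have h4 : A * (Lm / l1) ^ j * R < K * (l1 / Lm) := by
    rw [← h3]; exact mul_lt_mul_of_pos_right hK h2
  have h5 : K * (l1 / Lm) ≤ K * (1 - th) := mul_le_mul_of_nonneg_left (by linarith) hK0.le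
  have h6 : K * (1 - th) ≤ K * (1 - th) / (1 - kap) := by
    rw [le_div_iff₀ (by linarith)]
    have : 0 ≤ K * (1 - th) := mul_nonneg hK0.le (by linarith)
    nlinarith
  linarith

lemma aux_Q (m : ℕ) (t q : ℕ → ℕ)
    (ht : ∀ i, 1 ≤ i → i ≤ m → 0 < t i) (hti : ∀ i, 1 ≤ i → i ≤ m → t i ≤ m)
    (hq : ∀ j, q j = ((Finset.Icc 1 m).filter (fun i => j + 1 ≤ t i)).card) :
    m + ∑ h ∈ Finset.Icc 1 (m - 1), q h = ∑ i ∈ Finset.Icc 1 m, t i := by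
  have h1 : ∑ h ∈ Finset.Icc 1 (m - 1), q h =
      ∑ i ∈ Finset.Icc 1 m, ((Finset.Icc 1 (m-1)).filter (fun h => h + 1 ≤ t i)).card := by
    simp only [hq, Finset.card_filter]
    exact Finset.sum_comm
  have h2 : ∀ i ∈ Finset.Icc 1 m,
      1 + ((Finset.Icc 1 (m-1)).filter (fun h => h + 1 ≤ t i)).card = t i := by
    intro i hi
    rw [Finset.mem_Icc] at hi
    have a := ht i hi.1 hi.2
    have b := hti i hi.1 hi.2
    have : (Finset.Icc 1 (m-1)).filter (fun h => h + 1 ≤ t i) = Finset.Icc 1 (t i - 1) := by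
      ext h; simp only [Finset.mem_filter, Finset.mem_Icc]; omega
    rw [this]; simp; omega
  rw [h1, ← Finset.sum_congr rfl h2, Finset.sum_add_distrib]; simp

lemma aux_Del (m : ℕ) (hm : 2 ≤ m) (lam : ℕ → ℝ)
    (hmono : ∀ i, 1 ≤ i → i < m → lam i < lam (i + 1)) :
    0 < Del m lam ∧ Del m lam ≤ 1 / 2 ∧
      ∀ i, 1 ≤ i → i < m → lam i + 2 * Del m lam ≤ lam (i + 1) := by
  have hfin : ((fun i => lam (i + 1) - lam i) '' Set.Icc 1 (m - 1)).Finite :=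
    (Set.finite_Icc 1 (m-1)).image _
  have hne : ((fun i => lam (i + 1) - lam i) '' Set.Icc 1 (m - 1)).Nonempty :=
    ⟨_, 1, ⟨le_rfl, by omega⟩, rfl⟩
  have hpos : 0 < sInf ((fun i => lam (i + 1) - lam i) '' Set.Icc 1 (m - 1)) := by
    obtain ⟨i, hi, h⟩ := hne.csInf_mem hfin
    rw [← h]
    simp only [sub_pos]
    exact hmono i hi.1 (by have := hi.2; omega)
  unfold Del
  refine ⟨by positivity, by linarith [min_le_left 1 (sInf ((fun i => lam (i + 1) - lam i) '' Set.Icc 1 (m - 1)))], ?_⟩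
  intro i h1 h2
  have := csInf_le hfin.bddBelow (show lam (i+1) - lam i ∈ (fun i => lam (i + 1) - lam i) '' Set.Icc 1 (m - 1) from
    ⟨i, ⟨h1, by omega⟩, rfl⟩)
  linarith [min_le_right 1 (sInf ((fun i => lam (i + 1) - lam i) '' Set.Icc 1 (m - 1)))]

lemma aux_eps (n m : ℕ) (hn : 1 ≤ n) (lam : ℕ → ℝ) (c : ℝ) (hD : 0 < Del m lam)
    (hD1 : Del m lam ≤ 1 / 2) (hL : 1 ≤ Lamb m lam) (hc : c = Del m lam / (2 * Lamb m lam)) :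
    0 < eps n m lam ∧ eps n m lam ≤ Del m lam ∧
      eps n m lam * (4 * n * (Lamb m lam / c ^ n)) ≤ 1 := by
  unfold eps
  set D := Del m lam
  set L := Lamb m lam
  have hn' : (1:ℝ) ≤ n := by exact_mod_cast hn
  have hA : (4:ℝ) * 2 ^ n ≤ 2 ^ (3 * (n + 1) ^ 3) := by
    have : (4:ℝ) * 2 ^ n = 2 ^ (n + 2) := by rw [pow_add]; ring
    rw [this]
    apply pow_le_pow_right₀ (by norm_num)
    nlinarith [Nat.zero_le (n^2), Nat.zero_le (n^3)]
  have hB : L ^ (n + 1) ≤ L ^ ((n + 1) ^ 2) := by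
    apply pow_le_pow_right₀ hL; nlinarith
  have h2n : (1:ℝ) ≤ 2 ^ n := one_le_pow₀ (by norm_num)
  have hA1 : (1:ℝ) ≤ 2 ^ (3 * (n + 1) ^ 3) := by linarith
  have hB1 : 1 ≤ L ^ ((n + 1) ^ 2) := one_le_pow₀ hL
  have hden : 1 ≤ (n : ℝ) * 2 ^ (3 * (n + 1) ^ 3) * L ^ ((n + 1) ^ 2) :=
    one_le_mul_of_one_le_of_one_le (one_le_mul_of_one_le_of_one_le hn' hA1) hB1
  have hL0 : 0 < L := by linarith
  refine ⟨by positivity, ?_, ?_⟩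
  · calc _ ≤ D ^ (n ^ 2 + n + 1) := div_le_self (by positivity) hden
      _ ≤ D ^ 1 := pow_le_pow_of_le_one hD.le (by linarith) (by omega)
      _ = D := pow_one D
  · have hDn : D ^ (n ^ 2 + n + 1) ≤ D ^ n := pow_le_pow_of_le_one hD.le (by linarith) (by nlinarith)
    have e : 4 * n * (L / c ^ n) = n * (4 * 2 ^ n) * L ^ (n+1) / D ^ n := by
      rw [hc, div_pow, mul_pow, pow_succ]; field_simp
    rw [e, div_mul_div_comm, div_le_one (by positivity), mul_comm (D ^ _)]
    apply mul_le_mul _ hDn (by positivity) (by positivity)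
    apply mul_le_mul _ hB (by positivity) (by positivity)
    exact mul_le_mul_of_nonneg_left hA (by linarith)

noncomputable def auxU (n m : ℕ) (lam : ℕ → ℝ) (c : ℝ) (j d i : ℕ) : ℝ :=
  (4 * n : ℝ) ^ (n - j) * (∏ k ∈ Finset.Ico d m, (Lamb m lam / c ^ n / rho n m lam k)) * rho n m lam i

lemma aux_rho_prod (n m : ℕ) (hn : 1 ≤ n) (lam : ℕ → ℝ) (h0 : 0 < eps n m lam) (h1 : eps n m lam ≤ 1) :
    ∀ p e, e + 1 + p = m → 
    rho n m lam e ≤ eps n m lam ^ (n + 1) * ∏ k ∈ Finset.Ico (e+1) m, rho n m lam k := by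
  intro p
  induction p with
  | zero =>
    intro e he
    have : m - e = 1 := by omega
    rw [show m = e + 1 by omega]
    simp [rho]
  | succ p ih =>
    intro e he
    have h := ih (e+1) (by omega)
    rw [Finset.prod_eq_prod_Ico_succ_bot (by omega)]
    have hr : 0 < rho n m lam (e+1) := pow_pos h0 _
    calc rho n m lam e ≤ rho n m lam (e+1) * rho n m lam (e+1) := by
          unfold rho
          rw [← pow_add]
          apply pow_le_pow_of_le_one h0.le h1
          rw [show m - e = (m - (e+1)) + 1 by omega, pow_succ]
          have : 0 < (n+1)^(m-(e+1)) := by positivity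
          nlinarith
      _ ≤ rho n m lam (e+1) * (eps n m lam ^ (n + 1) * ∏ k ∈ Finset.Ico (e+1+1) m, rho n m lam k) :=
        mul_le_mul_of_nonneg_left h hr.le
      _ = _ := by ring

lemma aux_U (n m : ℕ) (hn : 1 ≤ n) (hmn : m ≤ n) (lam : ℕ → ℝ) (c : ℝ) (hD : 0 < Del m lam)
    (hD1 : Del m lam ≤ 1 / 2) (hL : 1 ≤ Lamb m lam) (hc : c = Del m lam / (2 * Lamb m lam))
    (j e i : ℕ) (he : e + 1 ≤ m) (hi : i ≤ e) :
    auxU n m lam c j (e+1) i ≤ Del m lam := by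
  obtain ⟨e0, e1, e2⟩ := aux_eps n m hn lam c hD hD1 hL hc
  have he1 : eps n m lam ≤ 1 := by linarith
  have hL0 : 0 < Lamb m lam := by linarith
  have hc0 : 0 < c := by rw [hc]; positivity
  have hc1 : c ≤ 1 := by rw [hc, div_le_one (by positivity)]; linarith
  have hDD : 1 ≤ Lamb m lam / c ^ n := by
    rw [le_div_iff₀ (by positivity)]
    linarith [pow_le_one₀ hc0.le hc1 (n := n)]
  have hrho : ∀ k, 0 < rho n m lam k := fun k => pow_pos e0 _
  have hP : 0 < ∏ k ∈ Finset.Ico (e+1) m, rho n m lam k := Finset.prod_pos (fun k _ => hrho k)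
  have hri : rho n m lam i ≤ rho n m lam e := by
    unfold rho
    apply pow_le_pow_of_le_one e0.le he1
    exact Nat.pow_le_pow_right (by omega) (by omega)
  have hr : rho n m lam i ≤ eps n m lam ^ (n + 1) * ∏ k ∈ Finset.Ico (e+1) m, rho n m lam k :=
    hri.trans (aux_rho_prod n m hn lam e0 he1 (m - (e+1)) e (by omega))
  have hn' : (1:ℝ) ≤ n := by exact_mod_cast hn
  unfold auxU
  rw [Finset.prod_div_distrib, Finset.prod_const, Nat.card_Ico]
  set DD := Lamb m lam / c ^ n
  set P := ∏ k ∈ Finset.Ico (e+1) m, rho n m lam k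
  have b1 : (4 * n : ℝ) ^ (n - j) ≤ (4 * n) ^ n := pow_le_pow_right₀ (by linarith) (by omega)
  have b2 : DD ^ (m - (e+1)) ≤ DD ^ n := pow_le_pow_right₀ hDD (by omega)
  calc (4 * n : ℝ) ^ (n - j) * (DD ^ (m - (e+1)) / P) * rho n m lam i
      ≤ (4 * n : ℝ) ^ n * (DD ^ n / P) * (eps n m lam ^ (n + 1) * P) := by
        apply mul_le_mul _ hr (hrho i).le (by positivity)
        apply mul_le_mul b1 _ (by positivity) (by positivity)
        exact div_le_div_of_nonneg_right b2 hP.le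
    _ = (eps n m lam * (4 * n * DD)) ^ n * eps n m lam := by
        rw [mul_pow (eps n m lam), mul_pow (4 * n : ℝ) DD, pow_succ]; field_simp
    _ ≤ 1 * eps n m lam := by
        apply mul_le_mul_of_nonneg_right _ e0.le
        exact pow_le_one₀ (by positivity) e2
    _ ≤ _ := by linarith

structure AuxSt where
  F : ℝ[X]
  G : ℝ[X]
  mu : ℝ
  nu : ℝ
  l : ℝ
  b : ℝ
  mm : ℝ

/-- Lemma `lemma21`: the backward construction of the sequences
`F_j, G_j, λ*_j, b_j, m_j, μ_j, ν_j`.  Here `t` gives the multiplicities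
(`t i ≤ i`, `∑ t i = n`), `T = max t i > 1`, `q j = |S_j|` where
`S_j = {λ_i : t_i ≥ j+1}`, and `s j` enumerates `S_j` increasingly as
`s j 1 < ⋯ < s j (q j)`.  The index set `I` of the paper is described by the
existence of `l ≤ T−2` with `l+1+∑_{h≤l} q h ≤ j ≤ l+∑_{h≤l+1} q h`. -/
theorem stmt_18 (n m : ℕ) (hm : 2 ≤ m) (hmn : m ≤ n) (lam : ℕ → ℝ)
    (hpos : 0 < lam 1) (hmono : ∀ i, 1 ≤ i → i < m → lam i < lam (i + 1))
    (t : ℕ → ℕ) (ht : ∀ i, 1 ≤ i → i ≤ m → 0 < t i)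
    (hsum : ∑ i ∈ Finset.Icc 1 m, t i = n)
    (hti : ∀ i, 1 ≤ i → i ≤ m → t i ≤ i)
    (T : ℕ) (hT : IsGreatest (t '' Set.Icc 1 m) T) (hT1 : 1 < T)
    (q : ℕ → ℕ)
    (hq : ∀ j, q j = ((Finset.Icc 1 m).filter (fun i => j + 1 ≤ t i)).card)
    (s : ℕ → ℕ → ℝ)
    (hsmono : ∀ j r, 1 ≤ j → j ≤ T - 1 → 1 ≤ r → r < q j → s j r < s j (r + 1))
    (hsmem : ∀ j r, 1 ≤ j → j ≤ T - 1 → 1 ≤ r → r ≤ q j →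
      ∃ i, 1 ≤ i ∧ i ≤ m ∧ j + 1 ≤ t i ∧ s j r = lam i)
    (hssurj : ∀ j i, 1 ≤ j → j ≤ T - 1 → 1 ≤ i → i ≤ m → j + 1 ≤ t i →
      ∃ r, 1 ≤ r ∧ r ≤ q j ∧ s j r = lam i)
    (Mass : ℕ → ℝ) (hMass : ∀ l, 1 ≤ l → l ≤ m → 0 < Mass l)
    (μn νn : ℝ) (hν : νn ≠ 0)
    (hμν : -μn / νn > CC n m lam * (Lamb m lam / lam 1) ^ n *
      (Lamb m lam * (∑ l ∈ Finset.Icc 1 m, Mass l) / (Lamb m lam - lam 1))) :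
    ∃ (F G : ℕ → Polynomial ℝ) (lamst bb mm μ ν : ℕ → ℝ),
      F n = ∏ i ∈ Finset.Icc 1 m, (Polynomial.X - Polynomial.C (lam i)) ∧
      G n = ∏ i ∈ Finset.Icc 1 (m - 1),
        (Polynomial.X - Polynomial.C (lam i + rho n m lam i)) ∧
      μ n = μn ∧ ν n = νn ∧
      ∀ j, 1 ≤ j → j ≤ n - 1 →
        (F j).Monic ∧ (G j).Monic ∧
        0 < lamst (j + 1) ∧ 0 < bb (j + 1) ∧ 0 < mm (j + 1) ∧
        -μ j / ν j > CC n m lam * (Lamb m lam / lam 1) ^ j *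
          (Lamb m lam * (∑ l ∈ Finset.Icc 1 m, Mass l) / (Lamb m lam - lam 1)) ∧
        ((¬ ∃ l, l ≤ T - 2 ∧ l + 1 + ∑ h ∈ Finset.Icc 1 l, q h ≤ j ∧
            j ≤ l + ∑ h ∈ Finset.Icc 1 (l + 1), q h) →
          (Polynomial.C (μ (j + 1)) * F (j + 1) =
              -(Polynomial.C (mm (j + 1)) * Polynomial.C (ν (j + 1))) * Polynomial.X *
                  G (j + 1) +
                Polynomial.C (bb (j + 1)) * Polynomial.C (μ j) *
                  (Polynomial.C (lamst (j + 1)) - Polynomial.X) * F j ∧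
            Polynomial.C (ν (j + 1)) * G (j + 1) =
              Polynomial.C (μ j) * F j +
                Polynomial.C (bb (j + 1)) * Polynomial.C (ν j) *
                  (Polynomial.C (lamst (j + 1)) - Polynomial.X) * G j)) ∧
        (∀ l, l ≤ T - 2 → l + 1 + ∑ h ∈ Finset.Icc 1 l, q h ≤ j →
            j ≤ l + ∑ h ∈ Finset.Icc 1 (l + 1), q h →
          (Polynomial.C (μ (j + 1)) * F (j + 1) =
              -(Polynomial.C (mm (j + 1)) * Polynomial.C (ν (j + 1))) * Polynomial.X *
                  G (j + 1) -
                Polynomial.C (bb (j + 1)) * Polynomial.C (μ j) * F j ∧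
            Polynomial.C (ν (j + 1)) * (Polynomial.X - Polynomial.C (lamst (j + 1))) *
                G (j + 1) =
              Polynomial.C (μ j) * F j +
                Polynomial.C (bb (j + 1)) * Polynomial.C (ν j) *
                  (Polynomial.C (lamst (j + 1)) - Polynomial.X) * G j ∧
            lamst (j + 1) =
              s (l + 1) (l + 1 + (∑ h ∈ Finset.Icc 1 (l + 1), q h) - j))) := by
  obtain ⟨hD, hD1, hDl⟩ := aux_Del m hm lam hmono
  have hn1 : 1 ≤ n := by omega
  have hn' : (1:ℝ) ≤ n := by exact_mod_cast hn1
  have hlm := aux_mono lam m hmono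
  have hlam2 : ∀ i k, 1 ≤ i → i < k → k ≤ m → lam i + 2 * Del m lam ≤ lam k := by
    intro i k h1 h2 h3
    have := hDl i h1 (by omega)
    rcases (Nat.succ_le_of_lt h2).eq_or_lt with h | h
    · rw [← h]; exact this
    · linarith [hlm (i+1) k (by omega) h h3]
  have hlmle : ∀ i k, 1 ≤ i → i ≤ k → k ≤ m → lam i ≤ lam k := by
    intro i k h1 h2 h3
    rcases h2.eq_or_lt with h | h
    · rw [h]
    · exact (hlm i k h1 h h3).le
  have hlpos : ∀ i, 1 ≤ i → i ≤ m → 0 < lam i := fun i h1 h2 =>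
    hpos.trans_le (hlmle 1 i le_rfl h1 h2)
  have hLm : Lamb m lam = 1 + lam m := rfl
  have hL : 1 ≤ Lamb m lam := by linarith [hlpos m (by omega) le_rfl]
  have hL0 : 0 < Lamb m lam := by linarith
  obtain ⟨c, hc⟩ : ∃ c, c = Del m lam / (2 * Lamb m lam) := ⟨_, rfl⟩
  have hc0 : 0 < c := by rw [hc]; positivity
  have hc1 : c ≤ 1 := by rw [hc, div_le_one (by positivity)]; linarith
  have heps := (aux_eps n m hn1 lam c hD hD1 hL hc)
  have hrho : ∀ k, 0 < rho n m lam k := fun k => pow_pos heps.1 _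
  have hrhom : ∀ k i, k ≤ i → rho n m lam k ≤ rho n m lam i := by
    intro k i hki
    unfold rho
    apply pow_le_pow_of_le_one heps.1.le (by linarith [heps.2.1])
    exact Nat.pow_le_pow_right (by omega) (by omega)
  have hUle : ∀ j e i, e + 1 ≤ m → i ≤ e → auxU n m lam c j (e+1) i ≤ Del m lam :=
    fun j e i => aux_U n m hn1 hmn lam c hD hD1 hL hc j e i
  have hPpos : ∀ d, 0 < ∏ k ∈ Finset.Ico d m, (Lamb m lam / c ^ n / rho n m lam k) := fun d =>
    Finset.prod_pos (fun k _ => by have := hrho k; positivity)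
  have hUpos : ∀ j d i, 0 < auxU n m lam c j d i := by
    intro j d i
    unfold auxU
    have := hrho i
    have := hPpos d
    positivity
  have hUm : ∀ j d k i, k ≤ i → auxU n m lam c j d k ≤ auxU n m lam c j d i := by
    intro j d k i hki
    unfold auxU
    have := hPpos d
    exact mul_le_mul_of_nonneg_left (hrhom k i hki) (by positivity)
  have hUB : ∀ j d i, j + 1 ≤ n → 4 * n * auxU n m lam c (j+1) d i = auxU n m lam c j d i := by
    intro j d i hj
    unfold auxU
    rw [show n - j = n - (j+1) + 1 by omega, pow_succ]; ring
  have hUA : ∀ j d i, j + 1 ≤ n → d + 1 ≤ m →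
      4 * n * (Lamb m lam / c ^ n / rho n m lam d) * auxU n m lam c (j+1) (d+1) i =
        auxU n m lam c j d i := by
    intro j d i hj hd
    unfold auxU
    rw [show n - j = n - (j+1) + 1 by omega, pow_succ,
      Finset.prod_eq_prod_Ico_succ_bot (a := d) (by omega)]; ring
  have hTm : ∀ i, 1 ≤ i → i ≤ m → t i ≤ T := fun i h1 h2 => hT.2 ⟨i, ⟨h1, h2⟩, rfl⟩
  obtain ⟨Q, hQ⟩ : ∃ Q : ℕ → ℕ, ∀ l, ∑ h ∈ Finset.Icc 1 l, q h = Q l := ⟨_, fun _ => rfl⟩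
  have hQ0 : Q 0 = 0 := by rw [← hQ]; simp
  have hQs : ∀ l, Q (l+1) = Q l + q (l+1) := by
    intro l; rw [← hQ, ← hQ, Finset.sum_Icc_succ_top (by omega)]
  have hQm : Monotone Q := monotone_nat_of_le_succ (fun l => by rw [hQs]; omega)
  have hQn : m + Q (m-1) = n := by
    rw [← hQ, aux_Q m t q ht (fun i h1 h2 => (hti i h1 h2).trans h2) hq, hsum]
  have hqm : q m = 0 := by
    rw [hq, Finset.card_eq_zero, Finset.filter_eq_empty_iff]
    intro i hi
    rw [Finset.mem_Icc] at hi
    have := hti i hi.1 hi.2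
    omega
  simp only [hQ]
  obtain ⟨A, hA⟩ : ∃ A, A = CC n m lam := ⟨_, rfl⟩
  obtain ⟨R, hR⟩ : ∃ R, R = (Lamb m lam * (∑ l ∈ Finset.Icc 1 m, Mass l) / (Lamb m lam - lam 1)) :=
    ⟨_, rfl⟩
  have hA0 : 0 ≤ A := by
    rw [hA]; unfold _root_.CC Cone
    have := hrho 1
    positivity
  have hR0 : 0 ≤ R := by
    rw [hR]
    have : 0 ≤ ∑ l ∈ Finset.Icc 1 m, Mass l := Finset.sum_nonneg (fun l hl => by
      rw [Finset.mem_Icc] at hl; exact (hMass l hl.1 hl.2).le)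
    apply div_nonneg (by positivity)
    linarith [hlmle 1 m le_rfl (by omega) le_rfl]
  rw [← hA, ← hR] at hμν ⊢
  have hl1L : 0 ≤ Lamb m lam / lam 1 := by positivity
  refine Exists.elim (aux_chain (S := AuxSt) n hn1
    (fun j st => ∃ (e : ℕ) (al be : ℕ → ℝ), e + 1 ≤ m ∧ e + 1 + Q e ≤ j ∧ j ≤ e + 1 + Q (e + 1) ∧
      st.F = ∏ k ∈ Finset.Icc 1 (e + 1), (X - C (al k)) ∧
      st.G = ∏ k ∈ Finset.Icc 1 e, (X - C (be k)) ∧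
      (∀ i, 1 ≤ i → i ≤ e + 1 → lam i ≤ al i) ∧
      (∀ i, 1 ≤ i → i ≤ e → al i + c ^ (n - j) * rho n m lam i ≤ be i) ∧
      (∀ i, 1 ≤ i → i ≤ e → be i ≤ lam i + auxU n m lam c j (e + 1) i) ∧
      al (e + 1) ≤ lam m ∧
      (j < e + 1 + Q (e + 1) → al (e + 1) = s (e + 1) (e + 1 + Q (e + 1) - j)) ∧
      (j = e + 1 + Q (e + 1) → e + 1 < m → al (e + 1) < lam (e + 2)) ∧
      st.nu ≠ 0 ∧ -st.mu / st.nu > A * (Lamb m lam / lam 1) ^ j * R)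
    (fun j st st' => st'.F.Monic ∧ st'.G.Monic ∧ 0 < st'.l ∧ 0 < st'.b ∧ 0 < st'.mm ∧
      -st'.mu / st'.nu > A * (Lamb m lam / lam 1) ^ j * R ∧
      ((¬ ∃ l, l ≤ T - 2 ∧ l + 1 + Q l ≤ j ∧ j ≤ l + Q (l + 1)) →
        (C st.mu * st.F = -(C st'.mm * C st.nu) * X * st.G + C st'.b * C st'.mu * (C st'.l - X) * st'.F ∧
          C st.nu * st.G = C st'.mu * st'.F + C st'.b * C st'.nu * (C st'.l - X) * st'.G)) ∧
      (∀ l, l ≤ T - 2 → l + 1 + Q l ≤ j → j ≤ l + Q (l + 1) →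
        (C st.mu * st.F = -(C st'.mm * C st.nu) * X * st.G - C st'.b * C st'.mu * st'.F ∧
          C st.nu * (X - C st'.l) * st.G = C st'.mu * st'.F + C st'.b * C st'.nu * (C st'.l - X) * st'.G ∧
          st'.l = s (l + 1) (l + 1 + Q (l + 1) - j))))
    ⟨∏ i ∈ Finset.Icc 1 m, (X - C (lam i)), ∏ i ∈ Finset.Icc 1 (m - 1), (X - C (lam i + rho n m lam i)),
      μn, νn, 0, 0, 0⟩ ?_ ?_) ?_
  · refine ⟨m - 1, lam, fun i => lam i + rho n m lam i, ?_⟩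
    have hm1 : m - 1 + 1 = m := by omega
    have hQm' := hQs (m-1)
    rw [hm1] at hQm' ⊢
    refine ⟨le_rfl, hQn.le, by omega, rfl, rfl, fun _ _ _ => le_rfl, ?_, ?_, le_rfl, ?_, ?_, hν, hμν⟩
    · intro i _ _; simp
    · intro i _ _; simp [auxU]
    · intro h; omega
    · intro _ h; omega
  · rintro j ⟨F, G, mu, nu, l0, b0, mm0⟩ hj1 hjn
      ⟨e, al, be, hem, hj2, hj3, hF, hG, hal, hgap, hbU, halm, hs1, hs2, hnu, hK⟩
    simp only at hF hG hnu hK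
    have hK0 : 0 < -mu / nu := lt_of_le_of_lt (by positivity) hK
    have hab : ∀ i, 1 ≤ i → i ≤ e → al i < be i := by
      intro i h1 h2
      have := hgap i h1 h2
      have := hrho i
      have : 0 < c ^ (n - (j+1)) * rho n m lam i := by positivity
      linarith
    have hcp : c ^ (n - j) = c * c ^ (n - (j+1)) := by
      rw [show n - j = n - (j+1) + 1 by omega, pow_succ]; ring
    by_cases hB : e + 1 + Q e ≤ j
    · -- case B
      have hQe := hQs e
      have hqpos : 0 < q (e+1) := by omega
      have hex := hqpos
      rw [hq, Finset.card_pos] at hex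
      obtain ⟨i0, hi0⟩ := hex
      rw [Finset.mem_filter, Finset.mem_Icc] at hi0
      have hi1 := hTm i0 hi0.1.1 hi0.1.2
      have hi2 := hti i0 hi0.1.1 hi0.1.2
      obtain ⟨r, hr⟩ : ∃ r, r = e + 1 + Q (e+1) - j := ⟨_, rfl⟩
      obtain ⟨lst, hlst⟩ : ∃ x, x = s (e+1) r := ⟨_, rfl⟩
      obtain ⟨i1, hi3, hi4, hi5, hi6⟩ := hsmem (e+1) r (by omega) (by omega) (by omega) (by omega)
      have hi7 := hti i1 hi3 hi4
      have hlstm : lst ≤ lam m := by rw [hlst, hi6]; exact hlmle i1 m hi3 hi4 le_rfl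
      have hll : al (e+1) < lst := by
        rcases hj3.eq_or_lt with h | h
        · have a1 := hs2 h (by omega)
          have a2 := hlmle (e+2) i1 (by omega) (by omega) hi4
          rw [hlst, hi6]; linarith
        · rw [hs1 h, hlst]
          have := hsmono (e+1) (r-1) (by omega) (by omega) (by omega) (by omega)
          rw [show r - 1 + 1 = r by omega] at this
          rwa [show e + 1 + Q (e+1) - (j+1) = r - 1 by omega]
      have hlst0 : 0 < lst := by
        linarith [hlpos (e+1) (by omega) hem, hal (e+1) (by omega) le_rfl]
      have hen : (e : ℝ) ≤ n := by exact_mod_cast (by omega : e ≤ n)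
      obtain ⟨th, al', be', t0, t1, t2, t3, t4, t5⟩ := aux_stepB e lam al be
        (auxU n m lam c (j+1) (e+1)) (Lamb m lam) (Del m lam) c lst (4 * n) (1/4) hD (by linarith) hc
        (by linarith) (fun i k a b d => hlam2 i k a b (by omega))
        (fun i a b => hlpos i a (by omega)) hal hab hbU (fun i _ _ => hUpos _ _ _)
        (fun k i _ a _ => hUm _ _ k i a)
        (fun i _ a => by rw [hUB _ _ _ hjn]; exact hUle j e i hem a) hll (by linarith) (by norm_num)
        (by
          have : (e:ℝ) * (2 / (4 * n)) ≤ 1 / 2 := by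
            rw [mul_div_assoc', div_le_div_iff₀ (by positivity) (by norm_num)]; linarith
          linarith)
      have hl1 : 0 < lam 1 / lst := by positivity
      rw [← hF, ← hG] at t4
      rw [← hG] at t5
      obtain ⟨mu', nu', b, mm, c1, c2, c3, c4, c5, c6⟩ := aux_algB F G _ _ th (1/4) lst mu nu hK0 hnu t0
        (by linarith) (by norm_num) (by norm_num) t4 t5
      have hK' := aux_Kbound A R (lam 1) (Lamb m lam) lst th (1/4) (-mu/nu) j hA0 hR0 hpos hlst0
        (by linarith) t1 (by norm_num) (by norm_num) hK
      rw [← c4] at hK'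
      have hFe : (X - C lst) * ∏ k ∈ Finset.Icc 1 e, (X - C (al' k)) =
          ∏ k ∈ Finset.Icc 1 (e+1), (X - C (al' k)) := by
        rw [Finset.prod_Icc_succ_top (by omega), t2]; ring
      rw [hFe] at c5 c6
      refine ⟨⟨∏ k ∈ Finset.Icc 1 (e+1), (X - C (al' k)), ∏ k ∈ Finset.Icc 1 e, (X - C (be' k)),
        mu', nu', lst, b, mm⟩, ⟨e, al', be', hem, hB, by omega, rfl, rfl, ?_, ?_, ?_, ?_, ?_, ?_, c1, hK'⟩,
        aux_monic _ _, aux_monic _ _, hlst0, c2, c3, hK', ?_, ?_⟩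
      · intro i h1 h2
        rcases h2.eq_or_lt with h | h
        · rw [h, t2]; linarith [hal (e+1) (by omega) le_rfl]
        · linarith [hal i h1 h2, (t3 i h1 (by omega)).1]
      · intro i h1 h2
        have a1 := mul_le_mul_of_nonneg_left (hgap i h1 h2) hc0.le
        have a2 := (t3 i h1 h2).2.1
        rw [hcp]
        linarith
      · intro i h1 h2
        rw [← hUB _ _ _ hjn]
        exact (t3 i h1 h2).2.2
      · rw [t2]; exact hlstm
      · intro _; rw [t2, hlst, hr]
      · intro h; omega
      · intro h
        exact absurd ⟨e, by omega, hB, by omega⟩ h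
      · intro l hl1 hl2 hl3
        have hle : l = e := by
          rcases lt_trichotomy l e with h | h | h
          · have := hQm (show l + 1 ≤ e by omega); omega
          · exact h
          · have := hQm (show e + 1 ≤ l by omega); omega
        subst hle
        exact ⟨c5, c6, by rw [← hr]; exact hlst⟩
    · -- case A
      have hje : j = e + Q e := by omega
      obtain ⟨e', rfl⟩ : ∃ e', e = e' + 1 := by
        cases e with
        | zero => omega
        | succ e' => exact ⟨e', rfl⟩
      have hr0 := hrho (e'+1)
      have hen : ((e' + 1 : ℕ) : ℝ) ≤ n := by exact_mod_cast (by omega : e' + 1 ≤ n)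
      have hW1 : 1 ≤ Lamb m lam / c ^ n / rho n m lam (e'+1) := by
        have a1 : rho n m lam (e'+1) ≤ 1 :=
          pow_le_one₀ heps.1.le (by linarith [heps.2.1])
        have a2 : c ^ n ≤ 1 := pow_le_one₀ hc0.le hc1
        rw [div_div, le_div_iff₀ (by positivity)]
        have : c ^ n * rho n m lam (e'+1) ≤ 1 := mul_le_one₀ a2 hr0.le a1
        linarith
      have hbD : ∀ i, 1 ≤ i → i ≤ e' + 1 → be i ≤ lam i + Del m lam := fun i h1 h2 => by
        linarith [hbU i h1 h2, hUle (j+1) (e'+1) i hem h2]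
      obtain ⟨th, kap, al', be', t0, t1, k0, k1, t2, t3, t4, t5⟩ := aux_stepA e' lam al be
        (auxU n m lam c (j+1) (e'+1+1)) (Lamb m lam) (Del m lam) c (Lamb m lam)
        (4 * n * (Lamb m lam / c ^ n / rho n m lam (e'+1))) hD (by linarith) hc
        (by nlinarith) (fun i k a b d => hlam2 i k a b (by omega))
        (fun i a b => hlpos i a (by omega)) hal hab hbD (fun i a b => hbU i a (by omega))
        (fun i _ _ => hUpos _ _ _)
        (fun k i _ a _ => hUm _ _ k i a)
        (fun i _ a => by rw [hUA _ _ _ hjn hem]; exact hUle j e' i (by omega) a)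
        (by rw [hLm]; linarith) le_rfl
        (by
          have g1 := hgap (e'+1) (by omega) le_rfl
          have g2 : c * (c ^ (n - (j+1)) * rho n m lam (e'+1)) ≤ c * (be (e'+1) - al (e'+1)) :=
            mul_le_mul_of_nonneg_left (by linarith) hc0.le
          have g3 : c ^ n ≤ c * c ^ (n - (j+1)) := by
            rw [← hcp]; exact pow_le_pow_of_le_one hc0.le hc1 (by omega)
          have g4 : c ^ n * rho n m lam (e'+1) ≤ c * (be (e'+1) - al (e'+1)) := by
            refine le_trans ?_ g2
            rw [← mul_assoc]; exact mul_le_mul_of_nonneg_right g3 hr0.le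
          have g5 : 0 < c ^ n * rho n m lam (e'+1) := by positivity
          calc _ ≤ (n:ℝ) * (2 / (4 * n * (Lamb m lam / c ^ n / rho n m lam (e'+1)))) :=
                mul_le_mul_of_nonneg_right hen (by positivity)
            _ = (c ^ n * rho n m lam (e'+1)) / 2 / Lamb m lam := by field_simp; norm_num
            _ < _ := by
              apply div_lt_div_of_pos_right _ hL0
              linarith)
      have hl1 : 0 < lam 1 / Lamb m lam := by positivity
      rw [← hF, ← hG] at t4
      rw [← hG] at t5
      obtain ⟨mu', nu', b, mm, c1, c2, c3, c4, c5, c6⟩ := aux_algA F G _ _ th kap (Lamb m lam) mu nu hK0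
        hnu t0 (by linarith) k0 k1 t4 t5
      have hK' := aux_Kbound A R (lam 1) (Lamb m lam) (Lamb m lam) th kap (-mu/nu) j hA0 hR0 hpos hL0
        le_rfl t1 k0 k1 hK
      rw [← c4] at hK'
      have hal2 : al' (e'+1) < lam (e'+2) := by
        linarith [(t2 (e'+1) (by omega) le_rfl).2, hlam2 (e'+1) (e'+2) (by omega) (by omega) (by omega)]
      have hQe := hQm (show e' ≤ e' + 1 by omega)
      refine ⟨⟨∏ k ∈ Finset.Icc 1 (e'+1), (X - C (al' k)), ∏ k ∈ Finset.Icc 1 e', (X - C (be' k)),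
        mu', nu', Lamb m lam, b, mm⟩, ⟨e', al', be', by omega, by omega, by omega, rfl, rfl,
          ?_, ?_, ?_, ?_, ?_, ?_, c1, hK'⟩,
        aux_monic _ _, aux_monic _ _, hL0, c2, c3, hK', ?_, ?_⟩
      · intro i h1 h2
        linarith [hal i h1 (by omega), (t2 i h1 (by omega)).1]
      · intro i h1 h2
        have a1 := mul_le_mul_of_nonneg_left (hgap i h1 (by omega)) hc0.le
        have a2 := (t3 i h1 h2).1
        rw [hcp]
        linarith
      · intro i h1 h2
        rw [← hUA _ _ _ hjn hem]
        exact (t3 i h1 h2).2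
      · linarith [hlmle (e'+2) m (by omega) (by omega) le_rfl]
      · intro h; omega
      · intro _ _; exact hal2
      · intro _
        exact ⟨c5, c6⟩
      · intro l hl1 hl2 hl3
        exfalso
        rcases Nat.lt_or_ge l (e'+1) with h | h
        · have := hQm (show l + 1 ≤ e' + 1 by omega); omega
        · have := hQm h; omega
  · rintro f ⟨hf, hfR⟩
    refine ⟨fun j => (f j).F, fun j => (f j).G, fun j => (f (j-1)).l, fun j => (f (j-1)).b,
      fun j => (f (j-1)).mm, fun j => (f j).mu, fun j => (f j).nu, by simp only [hf], by simp only [hf],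
      by simp only [hf], by simp only [hf], ?_⟩
    intro j h1 h2
    have := hfR j h1 (by omega)
    simpa only [Nat.add_sub_cancel] using this
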